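/- arXiv:1008.0080 — 2 statements merged into one kernel-verified Lean document; each statement's English description precedes it below -/
import Mathlib

section
/- (Meta-level contraposition) For all propositional formulas φ and ψ: if the implication φ → ψ is N-valid, then the contraposed implication ¬ψ → ¬φ is N-valid. -/
/-! ## Dialogical logic: formulas, statements, moves -/

/-- Propositional formulas, built from atoms (indexed by `ℕ`) and `¬`, `∧`, `∨`, `→`. -/
inductive Formula : Type
  | atom : ℕ → Formula
  | neg : Formula → Formula
  | conj : Formula → Formula → Formula
  | disj : Formula → Formula → Formula
  | impl : Formula → Formula → Formula
  deriving DecidableEq, Inhabited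

/-- Statements: formulas together with the three symbolic attacks `∧_L`, `∧_R` and `?`. -/
inductive Statement : Type
  | form : Formula → Statement
  | conjL : Statement  -- the symbolic attack ∧_L
  | conjR : Statement  -- the symbolic attack ∧_R
  | question : Statement   -- the symbolic attack ?
  deriving DecidableEq, Inhabited

/-- A formula is atomic iff it is an atom. -/
def Formula.isAtomic : Formula → Prop
  | .atom _ => True
  | _ => False

/-- A move of a dialogue: a statement together with a reference.  The reference is
`none` for the initial move, `some (m, true)` for an attack on the assertion made at
move `m`, and `some (m, false)` for a defense against the attack made at move `m`. -/
structure Move : Type where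
  stmt : Statement
  ref : Option (ℕ × Bool)
  deriving DecidableEq, Inhabited

/-! ## Particle rules -/

/-- Particle rules, attacks: `Attacks a φ` holds when the statement `a` is an
admissible attack against the assertion `φ`. -/
inductive Attacks : Statement → Formula → Prop
  | conjL (φ ψ : Formula) : Attacks .conjL (.conj φ ψ)
  | conjR (φ ψ : Formula) : Attacks .conjR (.conj φ ψ)
  | disj (φ ψ : Formula) : Attacks .question (.disj φ ψ)
  | impl (φ ψ : Formula) : Attacks (.form φ) (.impl φ ψ)
  | neg (φ : Formula) : Attacks (.form φ) (.neg φ)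

/-- Particle rules, defenses: `Defends s a φ` holds when the statement `s` is an
admissible defense of the assertion `φ` against the attack `a`.  (A negation admits
no defense.) -/
inductive Defends : Statement → Statement → Formula → Prop
  | conjL (φ ψ : Formula) : Defends (.form φ) .conjL (.conj φ ψ)
  | conjR (φ ψ : Formula) : Defends (.form ψ) .conjR (.conj φ ψ)
  | disjL (φ ψ : Formula) : Defends (.form φ) .question (.disj φ ψ)
  | disjR (φ ψ : Formula) : Defends (.form ψ) .question (.disj φ ψ)
  | impl (φ ψ : Formula) : Defends (.form ψ) (.form φ) (.impl φ ψ)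

/-! ## Dialogues

A (finite stage of a) dialogue is modelled as a list of moves; the move at index `i`
is the `i`-th move, made by Proponent P if `i` is even and by Opponent O if `i` is odd. -/

/-- The skeletal dialogue conditions: move 0 is an assertion of a formula with no
reference, and every later move is an attack on, or a defense against, a specified
earlier move of the other player, in accordance with the particle rules; only
non-atomic assertions may be attacked. -/
def IsDialogue (d : List Move) : Prop :=
  (∀ _ : 0 < d.length, d[0]!.ref = none ∧ ∃ φ : Formula, d[0]!.stmt = .form φ) ∧
  (∀ i : ℕ, 0 < i → i < d.length →
    ∃ (m : ℕ) (z : Bool), d[i]!.ref = some (m, z) ∧ m < i ∧ m % 2 ≠ i % 2 ∧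
      (z = true →
        ∃ φ : Formula, d[m]!.stmt = .form φ ∧ ¬ φ.isAtomic ∧ Attacks d[i]!.stmt φ) ∧
      (z = false →
        ∃ (k : ℕ) (φ : Formula), d[m]!.ref = some (k, true) ∧ k < m ∧
          d[k]!.stmt = .form φ ∧ Defends d[i]!.stmt d[m]!.stmt φ))

/-- Rule D10: P may assert an atomic formula only if O has asserted it earlier. -/
def RuleD10 (d : List Move) : Prop :=
  ∀ i < d.length, i % 2 = 0 → ∀ a : ℕ, d[i]!.stmt = .form (.atom a) →
    ∃ j < i, j % 2 = 1 ∧ d[j]!.stmt = .form (.atom a)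

/-- Rule D13: each P-assertion may be attacked at most once. -/
def RuleD13 (d : List Move) : Prop :=
  ∀ m : ℕ, m % 2 = 0 → ∀ i < d.length, ∀ j < d.length,
    d[i]!.ref = some (m, true) → d[j]!.ref = some (m, true) → i = j

/-- Rule E: O may only react (attack or defend) against the immediately preceding
P-move. -/
def RuleE (d : List Move) : Prop :=
  ∀ i < d.length, i % 2 = 1 → ∃ z : Bool, d[i]!.ref = some (i - 1, z)

/-- The rule set N = {D10, D13}. -/
def NRules (d : List Move) : Prop := RuleD10 d ∧ RuleD13 d

/-- The rule set CL = {D10, D13, E}. -/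
def CLRules (d : List Move) : Prop := RuleD10 d ∧ RuleD13 d ∧ RuleE d

/-- A dialogue commences with `φ` when its initial move is P's assertion of `φ`. -/
def CommencesWith (φ : Formula) (d : List Move) : Prop :=
  0 < d.length ∧ d[0]!.stmt = .form φ

/-- An `S`-dialogue for `φ` (for a rule set `S`): a dialogue commencing with `φ`
that obeys the structural rules `S`.  These are exactly the branches (identified
with their underlying move sequences) of the `S`-dialogue tree for `φ`. -/
def SDialogueFor (S : List Move → Prop) (φ : Formula) (d : List Move) : Prop :=
  IsDialogue d ∧ S d ∧ CommencesWith φ d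

/-- P wins a finite `S`-dialogue for `φ`: it ends with a P-move (the last index,
`d.length - 1`, is even, i.e. `d.length` is odd) and it cannot be extended by any
legal further (O-)move. -/
def WinsFor (S : List Move → Prop) (φ : Formula) (d : List Move) : Prop :=
  SDialogueFor S φ d ∧ d.length % 2 = 1 ∧ ∀ m : Move, ¬ SDialogueFor S φ (d ++ [m])

/-- An `S`-winning strategy for P for `φ`, modelled as a set `T` of `S`-dialogues for
`φ`: the nodes of a rooted subtree of the `S`-dialogue tree for `φ`, each node being
identified with the dialogue leading from the root to it.  The conditions state that
`T` is a nonempty, prefix-closed set of `S`-dialogues for `φ` (hence a rooted subtree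
of the `S`-dialogue tree with the same root), that every branch of `T` is a finite
`S`-dialogue won by P (leaves are wins for P, and there is no infinite branch), that
every node at odd depth (an O-move) has exactly one child, and that every node at
even depth (a P-move) has the same children in `T` as in the full dialogue tree. -/
structure IsWinningStrategy (S : List Move → Prop) (φ : Formula) (T : Set (List Move)) : Prop where
  nonempty : T.Nonempty
  dialogues : ∀ d ∈ T, SDialogueFor S φ d
  prefix_closed : ∀ d ∈ T, ∀ e : List Move, e <+: d → 0 < e.length → e ∈ T
  leaf_wins : ∀ d ∈ T, (∀ m : Move, d ++ [m] ∉ T) → WinsFor S φ d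
  no_infinite_branch : ∀ f : ℕ → Move, ∃ n : ℕ, 0 < n ∧ (List.ofFn fun i : Fin n => f i) ∉ T
  odd_unique_child : ∀ d ∈ T, 0 < d.length → d.length % 2 = 0 → ∃! m : Move, d ++ [m] ∈ T
  even_all_children : ∀ d ∈ T, d.length % 2 = 1 →
    ∀ m : Move, SDialogueFor S φ (d ++ [m]) → d ++ [m] ∈ T

/-- `φ` is `S`-valid iff P has an `S`-winning strategy for `φ`. -/
def SValid (S : List Move → Prop) (φ : Formula) : Prop :=
  ∃ T : Set (List Move), IsWinningStrategy S φ T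

/-- `φ` is N-valid (`⊨_N φ`) iff P has an N-winning strategy for `φ`. -/
def NValid (φ : Formula) : Prop := SValid NRules φ

/-!
P copies the given strategy for `φ → ψ`. In a dialogue for `¬ψ → ¬φ` the first moves are forced:
O attacks with `¬ψ`, P defends with `¬φ`. From there on the two games coincide: O's attack `φ` on
`φ → ψ` becomes the attack `φ` on `¬φ`, P's defense `ψ` becomes the attack `ψ` on `¬ψ`, and every
other move is kept, all references moving up by two. O gains no new options: `¬ψ → ¬φ` has
used up its only attack, and a negation admits no defense. So the given strategy, copied in this
way, is winning.
-/

/-! ### Copying strategies between dialogue games -/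

/-- P's initial assertion of `φ`, as a move. -/
def Formula.opening (φ : Formula) : Move := ⟨.form φ, none⟩

/-- The copy of a dialogue `d` in another game: the initial move of `d` is replaced by the
moves `o`, and every later move `x` by `g x`. -/
def transcribe (o : List Move) (g : Move → Move) (d : List Move) : List Move :=
  o ++ d.tail.map g

/-- Transcription by `o` and `g` embeds the `S`-dialogue tree for `φ` into the `S'`-dialogue tree
for `χ` so that P's strategies carry over: O's moves in `o` are forced, and each O-move
answering a transcribed dialogue is itself transcribed from an O-move. -/
structure IsTranscription (S S' : List Move → Prop) (φ χ : Formula) (o : List Move)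
    (g : Move → Move) : Prop where
  injective : Function.Injective g
  length_odd : o.length % 2 = 1
  prefix_dialogue : ∀ e, e ≠ [] → e <+: o → SDialogueFor S' χ e
  prefix_forced : ∀ e m x, e ++ [m] <+: o → e.length % 2 = 1 →
    SDialogueFor S' χ (e ++ [x]) → x = m
  dialogue : ∀ d, SDialogueFor S φ d → SDialogueFor S' χ (transcribe o g d)
  exists_of_opponent : ∀ d x, SDialogueFor S φ d → d.length % 2 = 1 →
    SDialogueFor S' χ (transcribe o g d ++ [x]) → ∃ m, g m = x ∧ SDialogueFor S φ (d ++ [m])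

/-- The strategy that plays along `o` and then copies the strategy `T`. -/
def transcribedStrategy (o : List Move) (g : Move → Move) (T : Set (List Move)) :
    Set (List Move) :=
  {e | e ≠ [] ∧ e <+: o} ∪ transcribe o g '' T

section Transcribe

variable {S S' : List Move → Prop} {φ χ : Formula} {o d : List Move} {g : Move → Move}
  {T : Set (List Move)}

lemma transcribe_snoc (hd : d ≠ []) (m : Move) :
    transcribe o g (d ++ [m]) = transcribe o g d ++ [g m] := by
  simp [transcribe, List.tail_append_of_ne_nil hd]

lemma SDialogueFor.ne_nil (h : SDialogueFor S φ d) : d ≠ [] :=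
  List.length_pos_iff.1 h.2.2.1

lemma SDialogueFor.exists_eq_cons (h : SDialogueFor S φ d) : ∃ t, d = φ.opening :: t := by
  obtain ⟨⟨hroot, -⟩, -, hpos, hstmt⟩ := h
  obtain ⟨hnone, -⟩ := hroot hpos
  rcases d with _ | ⟨⟨s, r⟩, t⟩
  · simp at hpos
  · simp only [List.getElem!_cons_zero] at hnone hstmt
    exact ⟨t, by rw [hnone, hstmt, Formula.opening]⟩

lemma IsWinningStrategy.opening_mem (hT : IsWinningStrategy S φ T) : [φ.opening] ∈ T := by
  obtain ⟨d, hd⟩ := hT.nonempty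
  obtain ⟨t, rfl⟩ := (hT.dialogues d hd).exists_eq_cons
  exact hT.prefix_closed _ hd _ (by simp) (by simp)

lemma exists_of_transcribe_eq_snoc (hg : Function.Injective g) {d' : List Move} {y : Move}
    (hd : SDialogueFor S φ d) (hd' : SDialogueFor S φ d')
    (h : transcribe o g d' = transcribe o g d ++ [y]) : ∃ m, g m = y ∧ d' = d ++ [m] := by
  obtain ⟨t, rfl⟩ := hd.exists_eq_cons
  obtain ⟨t', rfl⟩ := hd'.exists_eq_cons
  have hmap : t'.map g = t.map g ++ [y] := by simpa [transcribe] using h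
  obtain ⟨t₁, t₂, rfl, ht₁, ht₂⟩ := List.map_eq_append_iff.1 hmap
  obtain ⟨m, rfl, hm⟩ := List.map_eq_singleton_iff.1 ht₂
  exact ⟨m, hm, by rw [List.map_injective_iff.2 hg ht₁, List.cons_append]⟩

lemma mem_transcribedStrategy_of_mem (hd : d ∈ T) :
    transcribe o g d ∈ transcribedStrategy o g T :=
  .inr ⟨d, hd, rfl⟩

lemma snoc_mem_transcribedStrategy (hne : d ≠ []) {m : Move} (hm : d ++ [m] ∈ T) :
    transcribe o g d ++ [g m] ∈ transcribedStrategy o g T :=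
  transcribe_snoc (o := o) (g := g) hne m ▸ mem_transcribedStrategy_of_mem hm

lemma IsWinningStrategy.mem_transcribedStrategy_cases (hT : IsWinningStrategy S φ T)
    {e : List Move} (he : e ∈ transcribedStrategy o g T) :
    (e ≠ [] ∧ ∃ m, e ++ [m] <+: o) ∨ ∃ d ∈ T, transcribe o g d = e := by
  rcases he with ⟨hne, t, rfl⟩ | he
  · rcases t with _ | ⟨m, t⟩
    · exact .inr ⟨_, hT.opening_mem, by simp [transcribe]⟩
    · exact .inl ⟨hne, m, t, by simp⟩
  · exact .inr he

lemma IsWinningStrategy.prefix_mem_transcribedStrategy (hT : IsWinningStrategy S φ T)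
    {e e' : List Move} (he : e ∈ transcribedStrategy o g T) (hpre : e' <+: e) (hne : e' ≠ []) :
    e' ∈ transcribedStrategy o g T := by
  rcases he with ⟨-, he⟩ | ⟨d, hd, rfl⟩
  · exact .inl ⟨hne, hpre.trans he⟩
  · rcases List.prefix_or_prefix_of_prefix hpre (List.prefix_append o _) with hpre' | ⟨u, rfl⟩
    · exact .inl ⟨hne, hpre'⟩
    · obtain ⟨t, rfl⟩ := (hT.dialogues d hd).exists_eq_cons
      obtain ⟨v, hv, rfl⟩ := List.prefix_map_iff.1 ((List.prefix_append_right_inj o).1 hpre)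
      have hmem : φ.opening :: v ∈ T :=
        hT.prefix_closed _ hd _ (List.cons_prefix_cons.2 ⟨rfl, hv⟩) (by simp)
      exact mem_transcribedStrategy_of_mem hmem

lemma eq_of_snoc_mem_transcribedStrategy {e : List Move} {m y : Move} (hm : e ++ [m] <+: o)
    (hy : e ++ [y] ∈ transcribedStrategy o g T) : y = m := by
  rcases hy with ⟨-, hy⟩ | ⟨d, -, hd⟩
  · simpa using (List.prefix_of_prefix_length_le hy hm (by simp)).eq_of_length (by simp)
  · have hmy : e ++ [m] <+: e ++ [y] := hm.trans (hd ▸ List.prefix_append o _)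
    simpa using (hmy.eq_of_length (by simp)).symm

namespace IsTranscription

lemma ne_nil (h : IsTranscription S S' φ χ o g) : o ≠ [] := by
  rintro rfl
  simpa using h.length_odd

lemma length_transcribe_mod_two (h : IsTranscription S S' φ χ o g) (hd : d ≠ []) :
    (transcribe o g d).length % 2 = d.length % 2 := by
  have hodd := h.length_odd
  have hpos := List.length_pos_iff.2 hd
  simp only [transcribe, List.length_append, List.length_map, List.length_tail]
  omega

lemma transcribedStrategy_no_infinite_branch (h : IsTranscription S S' φ χ o g)
    (hT : IsWinningStrategy S φ T) (f : ℕ → Move) :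
    ∃ n : ℕ, 0 < n ∧ (List.ofFn fun i : Fin n => f i) ∉ transcribedStrategy o g T := by
  by_contra! hf
  obtain ⟨n, hn, hnT⟩ := hT.no_infinite_branch fun
    | 0 => φ.opening
    | j + 1 => Function.invFun g (f (o.length + j))
  obtain ⟨k, rfl⟩ := Nat.exists_eq_add_one.2 hn
  refine hnT ?_
  have hlen := List.length_pos_iff.2 h.ne_nil
  have hmem := hf (o.length + k) (by omega)
  rcases hT.mem_transcribedStrategy_cases hmem with ⟨-, m, hm⟩ | ⟨d, hd, heq⟩
  · have := hm.length_le
    simp at this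
  · obtain ⟨t, rfl⟩ := (hT.dialogues d hd).exists_eq_cons
    have htail : t.map g = List.ofFn fun i : Fin k => f (o.length + i) := by
      rw [List.ofFn_add] at heq
      exact (List.append_inj heq (by simp)).2
    have ht : t = List.ofFn fun i : Fin k => Function.invFun g (f (o.length + i)) := by
      have := congrArg (List.map (Function.invFun g)) htail
      rwa [List.map_map, Function.invFun_comp h.injective, List.map_id, List.map_ofFn] at this
    rw [ht] at hd
    rwa [List.ofFn_succ]

lemma winsFor_of_leaf (h : IsTranscription S S' φ χ o g) (hT : IsWinningStrategy S φ T)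
    {e : List Move} (he : e ∈ transcribedStrategy o g T)
    (hleaf : ∀ m, e ++ [m] ∉ transcribedStrategy o g T) : WinsFor S' χ e := by
  rcases hT.mem_transcribedStrategy_cases he with ⟨-, m, hm⟩ | ⟨d, hd, rfl⟩
  · exact absurd (.inl ⟨by simp, hm⟩) (hleaf m)
  have hne := (hT.dialogues d hd).ne_nil
  obtain ⟨hdial, hodd, hstuck⟩ := hT.leaf_wins d hd fun m hm =>
    hleaf (g m) (snoc_mem_transcribedStrategy hne hm)
  refine ⟨h.dialogue d hdial, (h.length_transcribe_mod_two hne).trans hodd, fun x hx => ?_⟩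
  obtain ⟨m, -, hm⟩ := h.exists_of_opponent d x hdial hodd hx
  exact hstuck m hm

lemma existsUnique_reply (h : IsTranscription S S' φ χ o g)
    (hT : IsWinningStrategy S φ T) {e : List Move} (he : e ∈ transcribedStrategy o g T)
    (heven : e.length % 2 = 0) : ∃! m, e ++ [m] ∈ transcribedStrategy o g T := by
  rcases hT.mem_transcribedStrategy_cases he with ⟨-, m, hm⟩ | ⟨d, hd, rfl⟩
  · exact ⟨m, .inl ⟨by simp, hm⟩, fun y hy => eq_of_snoc_mem_transcribedStrategy hm hy⟩
  have hdial := hT.dialogues d hd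
  have hne := hdial.ne_nil
  obtain ⟨m, hm, huniq⟩ := hT.odd_unique_child d hd (List.length_pos_iff.2 hne)
    (h.length_transcribe_mod_two hne ▸ heven)
  refine ⟨g m, snoc_mem_transcribedStrategy hne hm, fun y hy => ?_⟩
  rcases hT.mem_transcribedStrategy_cases hy with ⟨-, m', hm'⟩ | ⟨d', hd', heq⟩
  · have := hm'.length_le
    simp [transcribe] at this
  · obtain ⟨m', rfl, rfl⟩ :=
      exists_of_transcribe_eq_snoc h.injective hdial (hT.dialogues d' hd') heq
    rw [huniq m' hd']

lemma opponent_move_mem (h : IsTranscription S S' φ χ o g)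
    (hT : IsWinningStrategy S φ T) {e : List Move} {x : Move}
    (he : e ∈ transcribedStrategy o g T) (hodd : e.length % 2 = 1)
    (hx : SDialogueFor S' χ (e ++ [x])) : e ++ [x] ∈ transcribedStrategy o g T := by
  rcases hT.mem_transcribedStrategy_cases he with ⟨-, m, hm⟩ | ⟨d, hd, rfl⟩
  · rw [h.prefix_forced e m x hm hodd hx]
    exact .inl ⟨by simp, hm⟩
  · have hdial := hT.dialogues d hd
    rw [h.length_transcribe_mod_two hdial.ne_nil] at hodd
    obtain ⟨m, rfl, hm⟩ := h.exists_of_opponent d x hdial hodd hx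
    exact snoc_mem_transcribedStrategy hdial.ne_nil (hT.even_all_children d hd hodd m hm)

theorem isWinningStrategy (h : IsTranscription S S' φ χ o g) (hT : IsWinningStrategy S φ T) :
    IsWinningStrategy S' χ (transcribedStrategy o g T) where
  nonempty := ⟨o, .inl ⟨h.ne_nil, List.prefix_rfl⟩⟩
  dialogues := by
    rintro e (⟨hne, he⟩ | ⟨d, hd, rfl⟩)
    · exact h.prefix_dialogue e hne he
    · exact h.dialogue d (hT.dialogues d hd)
  prefix_closed _ he _ hpre hpos :=
    hT.prefix_mem_transcribedStrategy he hpre (List.length_pos_iff.1 hpos)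
  leaf_wins _ := h.winsFor_of_leaf hT
  no_infinite_branch := h.transcribedStrategy_no_infinite_branch hT
  odd_unique_child _ he _ := h.existsUnique_reply hT he
  even_all_children _ he hodd _ := h.opponent_move_mem hT he hodd

end IsTranscription

end Transcribe

/-! ### Extending an N-dialogue by one move -/

/-- `x` is an admissible next move after `d` as far as the particle rules go: an attack on an
assertion of the other player, or a defense against one of the other player's attacks. -/
inductive ObeysParticleRules (d : List Move) : Move → Prop
  | attack {m : ℕ} {s : Statement} {φ : Formula} (hm : m < d.length)
      (hturn : m % 2 ≠ d.length % 2) (hφ : d[m]!.stmt = .form φ) (hs : Attacks s φ) :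
      ObeysParticleRules d ⟨s, some (m, true)⟩
  | defense {m k : ℕ} {s : Statement} {φ : Formula} (hm : m < d.length)
      (hturn : m % 2 ≠ d.length % 2) (href : d[m]!.ref = some (k, true)) (hk : k < m)
      (hφ : d[k]!.stmt = .form φ) (hs : Defends s d[m]!.stmt φ) :
      ObeysParticleRules d ⟨s, some (m, false)⟩

/-- `x` is a legal next move after the N-dialogue `d`. -/
structure IsLegalNMove (d : List Move) (x : Move) : Prop where
  particle : ObeysParticleRules d x
  atom_asserted : d.length % 2 = 0 → ∀ a, x.stmt = .form (.atom a) →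
    ∃ j < d.length, j % 2 = 1 ∧ d[j]!.stmt = .form (.atom a)
  not_attacked : ∀ m, m % 2 = 0 → x.ref = some (m, true) →
    ∀ i < d.length, d[i]!.ref ≠ some (m, true)

section ListIndexing

variable {α : Type*}

lemma getElem!_snoc_of_lt [Inhabited α] {l : List α} {i : ℕ} (h : i < l.length) (a : α) :
    (l ++ [a])[i]! = l[i]! := by
  simp [h, Nat.lt_succ_of_lt h]

lemma getElem!_snoc_length [Inhabited α] (l : List α) (a : α) : (l ++ [a])[l.length]! = a := by
  simp

lemma getElem!_take_of_lt [Inhabited α] {i n : ℕ} (h : i < n) (l : List α) :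
    (l.take n)[i]! = l[i]! := by
  simp [h]

lemma forall_lt_length_snoc {l : List α} {a : α} {p : ℕ → Prop} :
    (∀ i < (l ++ [a]).length, p i) ↔ (∀ i < l.length, p i) ∧ p l.length := by
  rw [List.length_append, List.length_singleton, Nat.forall_lt_succ_right]

end ListIndexing

section Extension

variable {χ : Formula} {d : List Move} {x : Move}

lemma Attacks.not_isAtomic {s : Statement} (h : Attacks s χ) : ¬ χ.isAtomic := by
  cases h <;> exact id

lemma isDialogue_iff_forall_obeysParticleRules :
    IsDialogue d ↔
      (0 < d.length → d[0]!.ref = none ∧ ∃ φ : Formula, d[0]!.stmt = .form φ) ∧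
        ∀ i < d.length, 0 < i → ObeysParticleRules (d.take i) d[i]! := by
  refine and_congr_right fun _ => ⟨fun h i hi hpos => ?_, fun h i hpos hi => ?_⟩
  · have htake : (d.take i).length = i := List.length_take_of_le hi.le
    obtain ⟨m, z, href, hm, hturn, hatt, hdef⟩ := h i hpos hi
    generalize hx : d[i]! = x at *
    obtain ⟨s, r⟩ := x
    obtain rfl : r = some (m, z) := href
    cases z with
    | true =>
      obtain ⟨φ, hφ, -, hs⟩ := hatt rfl
      exact .attack (by omega) (by omega) (by rwa [getElem!_take_of_lt hm]) hs
    | false =>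
      obtain ⟨k, φ, hk, hkm, hφ, hs⟩ := hdef rfl
      refine .defense (by omega) (by omega) (by rwa [getElem!_take_of_lt hm]) hkm
        (by rwa [getElem!_take_of_lt (hkm.trans hm)]) (by rwa [getElem!_take_of_lt hm])
  · have htake : (d.take i).length = i := List.length_take_of_le hi.le
    have hobeys := h i hi hpos
    generalize d[i]! = x at *
    cases hobeys with
    | @attack m s φ hm hturn hφ hs =>
      rw [htake] at hm hturn
      rw [getElem!_take_of_lt hm] at hφ
      exact ⟨m, true, rfl, hm, hturn, fun _ => ⟨φ, hφ, hs.not_isAtomic, hs⟩, by simp⟩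
    | @defense m k s φ hm hturn href hk hφ hs =>
      rw [htake] at hm hturn
      rw [getElem!_take_of_lt hm] at href hs
      rw [getElem!_take_of_lt (hk.trans hm)] at hφ
      exact ⟨m, false, rfl, hm, hturn, by simp, fun _ => ⟨k, φ, href, hk, hφ, hs⟩⟩

lemma isDialogue_snoc_iff (hd : d ≠ []) :
    IsDialogue (d ++ [x]) ↔ IsDialogue d ∧ ObeysParticleRules d x := by
  have hpos := List.length_pos_iff.2 hd
  rw [isDialogue_iff_forall_obeysParticleRules, isDialogue_iff_forall_obeysParticleRules,
    forall_lt_length_snoc, getElem!_snoc_length, getElem!_snoc_of_lt hpos,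
    List.take_left' rfl, and_assoc]
  refine and_congr (by simp [hpos]) (and_congr (forall₂_congr fun i hi => ?_) (by simp [hpos]))
  rw [getElem!_snoc_of_lt hi, List.take_append_of_le_length hi.le]

lemma ruleD10_snoc_iff :
    RuleD10 (d ++ [x]) ↔ RuleD10 d ∧ (d.length % 2 = 0 → ∀ a, x.stmt = .form (.atom a) →
      ∃ j < d.length, j % 2 = 1 ∧ d[j]!.stmt = .form (.atom a)) := by
  have hbefore (i : ℕ) (hi : i ≤ d.length) (a : ℕ) :
      (∃ j < i, j % 2 = 1 ∧ (d ++ [x])[j]!.stmt = .form (.atom a)) ↔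
        ∃ j < i, j % 2 = 1 ∧ d[j]!.stmt = .form (.atom a) :=
    exists_congr fun j => and_congr_right fun hj => by
      rw [getElem!_snoc_of_lt (hj.trans_le hi)]
  unfold RuleD10
  rw [forall_lt_length_snoc, getElem!_snoc_length]
  refine and_congr (forall₂_congr fun i hi => ?_) ?_
  · simp only [getElem!_snoc_of_lt hi, hbefore i hi.le]
  · simp only [hbefore _ le_rfl]

lemma ruleD13_snoc_iff :
    RuleD13 (d ++ [x]) ↔ RuleD13 d ∧ ∀ m, m % 2 = 0 → x.ref = some (m, true) →
      ∀ i < d.length, d[i]!.ref ≠ some (m, true) := by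
  simp only [RuleD13, forall_lt_length_snoc, getElem!_snoc_length]
  rw [← forall₂_and]
  refine forall₂_congr fun m _ => ⟨fun ⟨hold, _⟩ => ⟨fun i hi j hj => ?_, ?_⟩, ?_⟩
  · simpa only [getElem!_snoc_of_lt hi, getElem!_snoc_of_lt hj] using (hold i hi).1 j hj
  · intro hx i hi hir
    exact hi.ne ((hold i hi).2 (by rwa [getElem!_snoc_of_lt hi]) hx)
  · rintro ⟨hold, hnew⟩
    refine ⟨fun i hi => ⟨fun j hj => ?_, fun hir hx => ?_⟩, fun j hj hx hjr => ?_,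
      fun _ _ => trivial⟩
    · simpa only [getElem!_snoc_of_lt hi, getElem!_snoc_of_lt hj] using hold i hi j hj
    · exact absurd (getElem!_snoc_of_lt hi x ▸ hir) (hnew hx i hi)
    · exact absurd (getElem!_snoc_of_lt hj x ▸ hjr) (hnew hx j hj)

lemma sDialogueFor_nRules_snoc_iff (hd : d ≠ []) :
    SDialogueFor NRules χ (d ++ [x]) ↔ SDialogueFor NRules χ d ∧ IsLegalNMove d x := by
  have hpos := List.length_pos_iff.2 hd
  have hcomm : CommencesWith χ (d ++ [x]) ↔ CommencesWith χ d := by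
    simp only [CommencesWith, getElem!_snoc_of_lt hpos, hpos, List.length_append, Nat.add_pos_left]
  simp only [SDialogueFor, NRules, isDialogue_snoc_iff hd, ruleD10_snoc_iff, ruleD13_snoc_iff,
    hcomm]
  constructor
  · rintro ⟨⟨h, hx⟩, ⟨⟨h₁₀, hx₁₀⟩, h₁₃, hx₁₃⟩, hc⟩
    exact ⟨⟨h, ⟨h₁₀, h₁₃⟩, hc⟩, hx, hx₁₀, hx₁₃⟩
  · rintro ⟨⟨h, ⟨h₁₀, h₁₃⟩, hc⟩, hx, hx₁₀, hx₁₃⟩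
    exact ⟨⟨h, hx⟩, ⟨⟨h₁₀, hx₁₀⟩, h₁₃, hx₁₃⟩, hc⟩

end Extension

/-! ### From `φ → ψ` to `¬ψ → ¬φ` -/

lemma not_defends_neg {s a : Statement} {χ : Formula} : ¬ Defends s a χ.neg :=
  nofun

lemma IsDialogue.attacks_opening {d : List Move} (hd : IsDialogue d) (hlen : 1 < d.length) :
    d[1]!.ref = some (0, true) ∧ ∃ χ : Formula, d[0]!.stmt = .form χ ∧ Attacks d[1]!.stmt χ := by
  obtain ⟨m, z, href, hm, -, hatt, hdef⟩ := hd.2 1 one_pos hlen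
  obtain rfl : m = 0 := by omega
  cases z with
  | true =>
    obtain ⟨χ, hχ, -, hs⟩ := hatt rfl
    exact ⟨href, χ, hχ, hs⟩
  | false =>
    obtain ⟨k, -, -, hk, -⟩ := hdef rfl
    exact absurd hk k.not_lt_zero

lemma SDialogueFor.getElem!_zero {S : List Move → Prop} {χ : Formula} {d : List Move}
    (hd : SDialogueFor S χ d) : d[0]! = χ.opening := by
  obtain ⟨t, rfl⟩ := hd.exists_eq_cons
  rfl

lemma sDialogueFor_nRules_opening {χ : Formula} (hχ : ¬ χ.isAtomic) :
    SDialogueFor NRules χ [χ.opening] := by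
  refine ⟨⟨fun _ => ⟨rfl, χ, rfl⟩, ?_⟩, ⟨?_, ?_⟩, by simp, rfl⟩
  · intro i hpos hi
    exact absurd (List.length_singleton ▸ hi) (by omega)
  · intro i hi _ a ha
    obtain rfl : i = 0 := by simpa using hi
    obtain rfl : χ = .atom a := by simpa [Formula.opening] using ha
    exact absurd trivial hχ
  · intro m _ i hi j hj _ _
    rw [List.length_singleton, Nat.lt_one_iff] at hi hj
    rw [hi, hj]

/-- The forced first moves of a dialogue for `¬ψ → ¬φ`: O attacks the implication by asserting
`¬ψ`, and P defends it by asserting `¬φ`. -/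
def contraOpening (φ ψ : Formula) : List Move :=
  [(Formula.impl ψ.neg φ.neg).opening, ⟨.form ψ.neg, some (0, true)⟩,
    ⟨.form φ.neg, some (1, false)⟩]

/-- The reference, in a dialogue for `¬ψ → ¬φ`, of the copy of a move with the given reference in
a dialogue for `φ → ψ`. P's defense of the initial implication becomes an attack on O's
assertion `¬ψ`; all other references move up by two. -/
def contraRef (r : ℕ × Bool) : ℕ × Bool :=
  if r = (1, false) then (1, true) else (r.1 + 2, r.2)

/-- The copy, in a dialogue for `¬ψ → ¬φ`, of a non-initial move of a dialogue for `φ → ψ`. -/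
def contraMove (x : Move) : Move :=
  ⟨x.stmt, x.ref.map contraRef⟩

/-- The copy for `¬ψ → ¬φ` of a dialogue for `φ → ψ`. -/
def contraDialogue (φ ψ : Formula) (d : List Move) : List Move :=
  transcribe (contraOpening φ ψ) contraMove d

lemma contraRef_attack (m : ℕ) : contraRef (m, true) = (m + 2, true) := by
  simp [contraRef]

lemma contraRef_defense {m : ℕ} (hm : m ≠ 1) : contraRef (m, false) = (m + 2, false) := by
  simp [contraRef, hm]

lemma contraRef_injective : Function.Injective contraRef := by
  rintro ⟨m, z⟩ ⟨m', z'⟩ h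
  unfold contraRef at h
  grind

lemma contraRef_eq_attack_iff {r : ℕ × Bool} {m : ℕ} :
    contraRef r = (m, true) ↔ (r = (1, false) ∧ m = 1) ∨ ∃ k, r = (k, true) ∧ m = k + 2 := by
  unfold contraRef
  grind

lemma contraMove_injective : Function.Injective contraMove := by
  rintro ⟨s, r⟩ ⟨s', r'⟩ h
  simp only [contraMove, Move.mk.injEq] at h ⊢
  exact ⟨h.1, Option.map_injective contraRef_injective h.2⟩

section Contra

variable {φ ψ : Formula} {d : List Move} {x : Move}

lemma length_contraDialogue (hd : d ≠ []) :
    (contraDialogue φ ψ d).length = d.length + 2 := by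
  have := List.length_pos_iff.2 hd
  simp only [contraDialogue, transcribe, contraOpening, List.length_append, List.length_cons,
    List.length_nil, List.length_map, List.length_tail]
  omega

lemma contraDialogue_getElem! {i : ℕ} (hi : i ≠ 0) :
    (contraDialogue φ ψ d)[i + 2]! = contraMove d[i]! := by
  obtain ⟨j, rfl⟩ := Nat.exists_eq_succ_of_ne_zero hi
  rcases d with _ | ⟨x, t⟩
  · rfl
  · rcases lt_or_ge j t.length with hj | hj
    · simp [contraDialogue, transcribe, contraOpening, hj]
    · have hdefault : contraMove default = default := rfl
      simp [contraDialogue, transcribe, contraOpening, hj, hdefault]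

lemma ObeysParticleRules.contra (hd : SDialogueFor NRules (φ.impl ψ) d)
    (hx : ObeysParticleRules d x) :
    ObeysParticleRules (contraDialogue φ ψ d) (contraMove x) := by
  have hlen := length_contraDialogue (φ := φ) (ψ := ψ) hd.ne_nil
  have hzero := hd.getElem!_zero
  cases hx with
  | @attack m s χ hm hturn hχ hs =>
    simp only [contraMove, Option.map_some, contraRef_attack]
    rcases eq_or_ne m 0 with rfl | hm₀
    · obtain rfl : φ.impl ψ = χ := by simpa [hzero, Formula.opening] using hχ
      cases hs
      exact .attack (by omega) (by omega) rfl (.neg φ)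
    · exact .attack (by omega) (by omega) (by rwa [contraDialogue_getElem! hm₀]) hs
  | @defense m k s χ hm hturn href hk hχ hs =>
    simp only [contraMove, Option.map_some]
    rcases eq_or_ne m 1 with rfl | hm₁
    · obtain rfl : k = 0 := by omega
      obtain rfl : φ.impl ψ = χ := by simpa [hzero, Formula.opening] using hχ
      obtain rfl : s = .form ψ := by
        generalize d[1]!.stmt = a at hs
        cases hs
        rfl
      exact .attack (by omega) (by omega) rfl (.neg ψ)
    · have hk₀ : k ≠ 0 := by
        rintro rfl
        exact hm₁ (hd.2.1.2 0 rfl m hm 1 (by omega) href (hd.1.attacks_opening (by omega)).1)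
      rw [contraRef_defense hm₁]
      have hm₀ : m ≠ 0 := by omega
      exact .defense (k := k + 2) (by omega) (by omega)
        (by rw [contraDialogue_getElem! hm₀, contraMove, href, Option.map_some, contraRef_attack])
        (by omega) (by rwa [contraDialogue_getElem! hk₀]) (by rwa [contraDialogue_getElem! hm₀])

lemma exists_attack_of_contraDialogue {m k : ℕ} {s : Statement} {χ : Formula} (hm : m % 2 = 0)
    (href : (contraDialogue φ ψ d)[m]!.ref = some (k, true))
    (hχ : (contraDialogue φ ψ d)[k]!.stmt = .form χ)
    (hs : Defends s (contraDialogue φ ψ d)[m]!.stmt χ) :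
    ∃ n j, m = n + 2 ∧ k = j + 2 ∧ d[n]!.ref = some (j, true) ∧ d[j]!.stmt = .form χ ∧
      Defends s d[n]!.stmt χ := by
  have hm₀ : m ≠ 0 := by
    rintro rfl
    exact Option.some_ne_none _ href.symm
  have hm₂ : m ≠ 2 := by
    rintro rfl
    have hrefs : some (1, false) = some (k, true) := href
    simp at hrefs
  obtain ⟨n, rfl⟩ : ∃ n, m = n + 2 := ⟨m - 2, by omega⟩
  rw [contraDialogue_getElem! (show n ≠ 0 by omega)] at href hs
  obtain ⟨r, hr, hrk⟩ := Option.map_eq_some_iff.1 href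
  rcases contraRef_eq_attack_iff.1 hrk with ⟨-, rfl⟩ | ⟨j, rfl, rfl⟩
  · obtain rfl : ψ.neg = χ := Statement.form.inj hχ
    exact absurd hs not_defends_neg
  · have hj : j ≠ 0 := by
      rintro rfl
      obtain rfl : φ.neg = χ := Statement.form.inj hχ
      exact not_defends_neg hs
    rw [contraDialogue_getElem! hj] at hχ
    exact ⟨n, j, rfl, rfl, hr, hχ, hs⟩

lemma exists_obeysParticleRules_of_contra (hd : SDialogueFor NRules (φ.impl ψ) d)
    (hodd : d.length % 2 = 1) (hx : ObeysParticleRules (contraDialogue φ ψ d) x)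
    (hx₀ : x.ref ≠ some (0, true)) :
    ∃ m, contraMove m = x ∧ ObeysParticleRules d m := by
  have hlen := length_contraDialogue (φ := φ) (ψ := ψ) hd.ne_nil
  cases hx with
  | @attack m s χ hm hturn hχ hs =>
    have hm₀ : m ≠ 0 := by
      rintro rfl
      exact hx₀ rfl
    obtain ⟨n, rfl⟩ : ∃ n, m = n + 2 := ⟨m - 2, by omega⟩
    refine ⟨⟨s, some (n, true)⟩, by simp [contraMove, contraRef_attack], ?_⟩
    rcases eq_or_ne n 0 with rfl | hn
    · obtain rfl : φ.neg = χ := Statement.form.inj hχ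
      cases hs
      exact .attack (by omega) (by omega) (by rw [hd.getElem!_zero, Formula.opening]) (.impl φ ψ)
    · rw [contraDialogue_getElem! hn] at hχ
      exact .attack (by omega) (by omega) hχ hs
  | @defense m k s χ hm hturn href hk hχ hs =>
    obtain ⟨n, j, rfl, rfl, href, hχ, hs⟩ :=
      exists_attack_of_contraDialogue (by omega) href hχ hs
    exact ⟨⟨s, some (n, false)⟩, by rw [contraMove, Option.map_some, contraRef_defense (by omega)],
      .defense (by omega) (by omega) href (by omega) hχ hs⟩

lemma contraMove_ref_eq_attack_iff {m : ℕ} (hm : m ≠ 1) :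
    (contraMove x).ref = some (m, true) ↔ ∃ k, m = k + 2 ∧ x.ref = some (k, true) := by
  simp only [contraMove, Option.map_eq_some_iff, contraRef_eq_attack_iff, hm, and_false, false_or]
  grind

lemma contraDialogue_ref_eq_attack_iff (hd : SDialogueFor NRules (φ.impl ψ) d) {i m : ℕ}
    (hm : m % 2 = 0) :
    (contraDialogue φ ψ d)[i]!.ref = some (m + 2, true) ↔
      ∃ j, i = j + 2 ∧ d[j]!.ref = some (m, true) := by
  match i with
  | 0 | 1 => simp [contraDialogue, transcribe, contraOpening, Formula.opening]
  | 2 =>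
    have hroot : d[0]!.ref = none := by rw [hd.getElem!_zero, Formula.opening]
    simp [contraDialogue, transcribe, contraOpening, -List.getElem!_eq_getElem?_getD, hroot]
  | i + 3 =>
    rw [contraDialogue_getElem! i.succ_ne_zero, contraMove_ref_eq_attack_iff (by omega)]
    simp

lemma IsLegalNMove.contra (hd : SDialogueFor NRules (φ.impl ψ) d) (hx : IsLegalNMove d x) :
    IsLegalNMove (contraDialogue φ ψ d) (contraMove x) where
  particle := hx.particle.contra hd
  atom_asserted := by
    rw [length_contraDialogue hd.ne_nil]
    intro hturn a ha
    obtain ⟨j, hj, hodd, hja⟩ := hx.atom_asserted (by omega) a ha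
    refine ⟨j + 2, by omega, by omega, ?_⟩
    rwa [contraDialogue_getElem! (by omega)]
  not_attacked m hm href i hi hir := by
    obtain ⟨k, rfl, hk⟩ := (contraMove_ref_eq_attack_iff (by omega)).1 href
    obtain ⟨j, rfl, hj⟩ := (contraDialogue_ref_eq_attack_iff hd (by omega)).1 hir
    rw [length_contraDialogue hd.ne_nil] at hi
    exact hx.not_attacked k (by omega) hk j (by omega) hj

lemma exists_isLegalNMove_of_contra (hd : SDialogueFor NRules (φ.impl ψ) d)
    (hodd : d.length % 2 = 1) (hx : IsLegalNMove (contraDialogue φ ψ d) x) :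
    ∃ m, contraMove m = x ∧ IsLegalNMove d m := by
  have hlen := length_contraDialogue (φ := φ) (ψ := ψ) hd.ne_nil
  have hx₀ : x.ref ≠ some (0, true) := fun href =>
    hx.not_attacked 0 rfl href 1 (by omega) rfl
  obtain ⟨m, rfl, hm⟩ := exists_obeysParticleRules_of_contra hd hodd hx.particle hx₀
  refine ⟨m, rfl, hm, by omega, fun k hk href i hi hir => ?_⟩
  exact hx.not_attacked (k + 2) (by omega)
    ((contraMove_ref_eq_attack_iff (by omega)).2 ⟨k, rfl, href⟩) (i + 2) (by omega)
    ((contraDialogue_ref_eq_attack_iff hd hk).2 ⟨i, rfl, hir⟩)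

lemma sDialogueFor_contraOpening_prefix {e : List Move} (hne : e ≠ [])
    (he : e <+: contraOpening φ ψ) : SDialogueFor NRules (ψ.neg.impl φ.neg) e := by
  have h₁ : SDialogueFor NRules (ψ.neg.impl φ.neg) [(ψ.neg.impl φ.neg).opening] :=
    sDialogueFor_nRules_opening id
  have h₂ := (sDialogueFor_nRules_snoc_iff (by simp)).2 ⟨h₁,
    .attack (m := 0) (s := .form ψ.neg) (by simp) (by simp) rfl (.impl _ _), by simp,
      by simp [Formula.opening]⟩
  have h₃ := (sDialogueFor_nRules_snoc_iff (by simp)).2 ⟨h₂,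
    .defense (m := 1) (k := 0) (s := .form φ.neg) (by simp) (by simp) rfl one_pos rfl (.impl _ _),
      by simp, by simp⟩
  have hinits := (List.mem_inits _ _).2 he
  simp only [contraOpening, List.inits, List.map_cons, List.map_nil, List.mem_cons,
    List.not_mem_nil, or_false, hne, false_or] at hinits
  rcases hinits with rfl | rfl | rfl
  exacts [h₁, h₂, h₃]

lemma eq_of_contraOpening_prefix {e : List Move} {m : Move}
    (hm : e ++ [m] <+: contraOpening φ ψ) (hodd : e.length % 2 = 1)
    (hx : SDialogueFor NRules (ψ.neg.impl φ.neg) (e ++ [x])) : x = m := by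
  have hlen : e.length < 3 := by simpa [contraOpening] using hm.length_le
  obtain ⟨y, rfl⟩ := List.length_eq_one_iff.1 (show e.length = 1 by omega)
  obtain ⟨rfl, rfl⟩ : y = (ψ.neg.impl φ.neg).opening ∧ m = ⟨.form ψ.neg, some (0, true)⟩ := by
    simpa [contraOpening] using hm
  obtain ⟨href, χ, hχ, hs⟩ := hx.1.attacks_opening (by simp)
  obtain ⟨s, r⟩ := x
  obtain rfl : r = some (0, true) := href
  obtain rfl : ψ.neg.impl φ.neg = χ := Statement.form.inj hχ
  cases (show Attacks s _ from hs)
  rfl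

lemma SDialogueFor.contra (hd : SDialogueFor NRules (φ.impl ψ) d) :
    SDialogueFor NRules (ψ.neg.impl φ.neg) (contraDialogue φ ψ d) := by
  induction d using List.reverseRecOn with
  | nil => exact absurd rfl hd.ne_nil
  | append_singleton d x ih =>
    rcases eq_or_ne d [] with rfl | hne
    · exact sDialogueFor_contraOpening_prefix (by simp [contraDialogue, transcribe, contraOpening])
        (by simp [contraDialogue, transcribe])
    · obtain ⟨hd, hx⟩ := (sDialogueFor_nRules_snoc_iff hne).1 hd
      rw [contraDialogue, transcribe_snoc hne]
      exact (sDialogueFor_nRules_snoc_iff (ih hd).ne_nil).2 ⟨ih hd, hx.contra hd⟩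

lemma isTranscription_contra (φ ψ : Formula) :
    IsTranscription NRules NRules (φ.impl ψ) (ψ.neg.impl φ.neg) (contraOpening φ ψ)
      contraMove where
  injective := contraMove_injective
  length_odd := by simp [contraOpening]
  prefix_dialogue _ := sDialogueFor_contraOpening_prefix
  prefix_forced _ _ _ := eq_of_contraOpening_prefix
  dialogue _ := SDialogueFor.contra
  exists_of_opponent d x hd hodd hx := by
    obtain ⟨-, hx⟩ := (sDialogueFor_nRules_snoc_iff hd.contra.ne_nil).1 hx
    obtain ⟨m, hm, hlegal⟩ := exists_isLegalNMove_of_contra hd hodd hx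
    exact ⟨m, hm, (sDialogueFor_nRules_snoc_iff hd.ne_nil).2 ⟨hd, hlegal⟩⟩

end Contra

/-- **Meta-level contraposition.** For all formulas `φ` and `ψ`:
if `φ → ψ` is N-valid, then `¬ψ → ¬φ` is N-valid. -/
theorem meta_contraposition (φ ψ : Formula) (h : NValid (Formula.impl φ ψ)) :
    NValid (Formula.impl (Formula.neg ψ) (Formula.neg φ)) := by
  obtain ⟨T, hT⟩ := h
  exact ⟨_, (isTranscription_contra φ ψ).isWinningStrategy hT⟩
end

section
/- Conjunction elimination (p ∧ q) → p, for distinct atoms p and q, is not N-valid. -/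
/-!
A winning strategy has no infinite branch, so it contains a dialogue after which O has no legal
move. But D10 and D13 restrict neither how often nor how late O may defend against an attack: once P
has made an attack that admits a defense, O can repeat that defense forever. In a dialogue for
`χ → a` with `a` an atom, O first asserts `χ`. If `χ` is not `a` itself, D10 forbids P from
answering with `a`, so P has to attack `χ`.
-/

theorem exists_forall_ofFn_mem {α : Type*} {T : Set (List α)} (hnil : [] ∈ T)
    (hext : ∀ l ∈ T, ∃ a, l ++ [a] ∈ T) :
    ∃ f : ℕ → α, ∀ n, (List.ofFn fun i : Fin n => f i) ∈ T := by
  choose next hnext using hext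
  let branch : ℕ → T := Nat.rec ⟨[], hnil⟩ fun _ l => ⟨l ++ [next l l.2], hnext l l.2⟩
  let f (n : ℕ) : α := next (branch n).1 (branch n).2
  have ofFn_eq_branch (n : ℕ) : (List.ofFn fun i : Fin n => f i) = (branch n).1 := by
    induction n with
    | zero => rfl
    | succ n ih => rw [List.ofFn_succ_last]; exact congrArg (· ++ [f n]) ih
  exact ⟨f, fun n => ofFn_eq_branch n ▸ (branch n).2⟩

theorem getElem!_eq_of_isPrefix {α : Type*} [Inhabited α] {l₁ l₂ : List α} (h : l₁ <+: l₂) {i : ℕ}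
    (hi : i < l₁.length) : l₂[i]! = l₁[i]! := by
  rw [getElem!_pos l₁ i hi, getElem!_pos l₂ i (hi.trans_le h.length_le), h.getElem hi]

theorem getElem!_concat_length {α : Type*} [Inhabited α] (l : List α) (a : α) :
    (l ++ [a])[l.length]! = a := by
  rw [getElem!_pos _ _ (by simp), List.getElem_concat_length rfl]

theorem Attacks.not_isAtomic_s14 {s : Statement} {φ : Formula} (h : Attacks s φ) : ¬ φ.isAtomic := by
  cases h <;> exact not_false

theorem attacks_impl_iff {s : Statement} {φ ψ : Formula} :
    Attacks s (.impl φ ψ) ↔ s = .form φ :=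
  ⟨fun h => by cases h; rfl, fun h => h ▸ .impl φ ψ⟩

theorem defends_impl_iff {s : Statement} {φ ψ : Formula} :
    Defends s (.form φ) (.impl φ ψ) ↔ s = .form ψ :=
  ⟨fun h => by cases h; rfl, fun h => h ▸ .impl φ ψ⟩

/-- The move `x`, played after the moves `d`, is an attack on the assertion made at move `m`,
in accordance with the particle rules. The players' turns are not taken into account. -/
def IsAttackOn (d : List Move) (x : Move) (m : ℕ) : Prop :=
  x.ref = some (m, true) ∧ ∃ φ, d[m]!.stmt = .form φ ∧ Attacks x.stmt φ

/-- The move `x`, played after the moves `d`, is a defense against the attack made at move `m`,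
in accordance with the particle rules. The players' turns are not taken into account. -/
def IsDefenseAgainst (d : List Move) (x : Move) (m : ℕ) : Prop :=
  x.ref = some (m, false) ∧ ∃ k φ, d[m]!.ref = some (k, true) ∧ k < m ∧
    d[k]!.stmt = .form φ ∧ Defends x.stmt d[m]!.stmt φ

theorem IsAttackOn.of_isPrefix {d e : List Move} {x : Move} {m : ℕ} (hde : d <+: e)
    (hm : m < d.length) (h : IsAttackOn d x m) : IsAttackOn e x m := by
  unfold IsAttackOn
  rwa [getElem!_eq_of_isPrefix hde hm]

theorem IsDefenseAgainst.of_isPrefix {d e : List Move} {x : Move} {m : ℕ} (hde : d <+: e)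
    (hm : m < d.length) (h : IsDefenseAgainst d x m) : IsDefenseAgainst e x m := by
  obtain ⟨hx, k, φ, href, hkm, hk, hdef⟩ := h
  refine ⟨hx, k, φ, ?_, hkm, ?_, ?_⟩
  · rwa [getElem!_eq_of_isPrefix hde hm]
  · rwa [getElem!_eq_of_isPrefix hde (hkm.trans hm)]
  · rwa [getElem!_eq_of_isPrefix hde hm]

theorem isDialogue_iff {d : List Move} :
    IsDialogue d ↔ (0 < d.length → d[0]!.ref = none ∧ ∃ φ, d[0]!.stmt = .form φ) ∧
      ∀ i, 0 < i → i < d.length →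
        ∃ m < i, m % 2 ≠ i % 2 ∧ (IsAttackOn d d[i]! m ∨ IsDefenseAgainst d d[i]! m) := by
  refine and_congr_right' (forall₃_congr fun i _ _ => ⟨?_, ?_⟩)
  · rintro ⟨m, _ | _, href, hmi, hpar, hatt, hdef⟩
    · exact ⟨m, hmi, hpar, .inr ⟨href, hdef rfl⟩⟩
    · obtain ⟨φ, hφ, -, h⟩ := hatt rfl
      exact ⟨m, hmi, hpar, .inl ⟨href, φ, hφ, h⟩⟩
  · rintro ⟨m, hmi, hpar, ⟨href, φ, hφ, h⟩ | ⟨href, h⟩⟩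
    · exact ⟨m, true, href, hmi, hpar, fun _ => ⟨φ, hφ, h.not_isAtomic_s14, h⟩, nofun⟩
    · exact ⟨m, false, href, hmi, hpar, nofun, fun _ => h⟩

section Concat

variable {d : List Move} {x : Move} {m : ℕ}

theorem IsDialogue.concat (hd : IsDialogue d) (hm : m < d.length) (hpar : m % 2 ≠ d.length % 2)
    (hx : IsAttackOn d x m ∨ IsDefenseAgainst d x m) : IsDialogue (d ++ [x]) := by
  have hpre : d <+: d ++ [x] := d.prefix_append [x]
  have lift {y : Move} {k : ℕ} (hk : k < d.length) :
      IsAttackOn d y k ∨ IsDefenseAgainst d y k →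
        IsAttackOn (d ++ [x]) y k ∨ IsDefenseAgainst (d ++ [x]) y k :=
    Or.imp (.of_isPrefix hpre hk) (.of_isPrefix hpre hk)
  obtain ⟨hzero, hstep⟩ := isDialogue_iff.mp hd
  refine isDialogue_iff.mpr ⟨fun _ => ?_, fun i hi hlen => ?_⟩
  · have hpos : 0 < d.length := by omega
    rw [getElem!_eq_of_isPrefix hpre hpos]
    exact hzero hpos
  · obtain hid | rfl : i < d.length ∨ i = d.length := by
      rw [List.length_append, List.length_singleton] at hlen; omega
    · obtain ⟨k, hki, hkpar, h⟩ := hstep i hi hid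
      rw [getElem!_eq_of_isPrefix hpre hid]
      exact ⟨k, hki, hkpar, lift (hki.trans hid) h⟩
    · rw [getElem!_concat_length]
      exact ⟨m, hm, hpar, lift hm hx⟩

theorem RuleD10.concat_of_odd (hd : RuleD10 d) (hodd : d.length % 2 = 1) (x : Move) :
    RuleD10 (d ++ [x]) := by
  have hpre : d <+: d ++ [x] := d.prefix_append [x]
  intro i hlen heven a ha
  have hid : i < d.length := by
    rw [List.length_append, List.length_singleton] at hlen; omega
  rw [getElem!_eq_of_isPrefix hpre hid] at ha
  obtain ⟨j, hji, hjodd, hj⟩ := hd i hid heven a ha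
  exact ⟨j, hji, hjodd, by rwa [getElem!_eq_of_isPrefix hpre (hji.trans hid)]⟩

theorem RuleD13.concat (hd : RuleD13 d)
    (hx : ∀ m, x.ref = some (m, true) → ∀ i < d.length, d[i]!.ref ≠ some (m, true)) :
    RuleD13 (d ++ [x]) := by
  have hpre : d <+: d ++ [x] := d.prefix_append [x]
  intro m hm i hi j hj href_i href_j
  wlog hij : i < j generalizing i j
  · by_contra hne
    exact hne (this j hj i hi href_j href_i (by omega)).symm
  rw [List.length_append, List.length_singleton] at hj
  have hid : i < d.length := by omega
  rw [getElem!_eq_of_isPrefix hpre hid] at href_i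
  obtain hjd | rfl : j < d.length ∨ j = d.length := by omega
  · rw [getElem!_eq_of_isPrefix hpre hjd] at href_j
    exact hd m hm i hid j hjd href_i href_j
  · rw [getElem!_concat_length] at href_j
    exact absurd href_i (hx m href_j i hid)

theorem CommencesWith.concat {φ : Formula} (hd : CommencesWith φ d) (x : Move) :
    CommencesWith φ (d ++ [x]) :=
  ⟨by simp, by rw [getElem!_eq_of_isPrefix (d.prefix_append [x]) hd.1]; exact hd.2⟩

end Concat

namespace SDialogueFor

variable {S : List Move → Prop} {φ : Formula} {d : List Move} {x : Move} {m : ℕ}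

theorem concat_attack (hd : SDialogueFor NRules φ d) (hodd : d.length % 2 = 1)
    (hm : m < d.length) (heven : m % 2 = 0) (hx : IsAttackOn d x m)
    (hfresh : ∀ i < d.length, d[i]!.ref ≠ some (m, true)) :
    SDialogueFor NRules φ (d ++ [x]) := by
  refine ⟨hd.1.concat hm (by omega) (.inl hx),
    ⟨hd.2.1.1.concat_of_odd hodd x, hd.2.1.2.concat fun k hk => ?_⟩, hd.2.2.concat x⟩
  obtain rfl : m = k := by simpa [hx.1] using hk
  exact hfresh

theorem concat_defense (hd : SDialogueFor NRules φ d) (hodd : d.length % 2 = 1)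
    (hm : m < d.length) (heven : m % 2 = 0) (hx : IsDefenseAgainst d x m) :
    SDialogueFor NRules φ (d ++ [x]) :=
  ⟨hd.1.concat hm (by omega) (.inr hx),
    ⟨hd.2.1.1.concat_of_odd hodd x, hd.2.1.2.concat fun k hk => by simp [hx.1] at hk⟩,
    hd.2.2.concat x⟩

theorem isAttackOn_one (hd : SDialogueFor S φ d) (hlen : 1 < d.length) :
    IsAttackOn d d[1]! 0 := by
  obtain ⟨m, hm, -, hatt | ⟨-, k, -, -, hk, -⟩⟩ :=
    (isDialogue_iff.mp hd.1).2 1 one_pos hlen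
  · rwa [Nat.lt_one_iff.mp hm] at hatt
  · omega

theorem isAttackOn_or_isDefenseAgainst_two (hd : SDialogueFor S φ d) (hlen : 2 < d.length) :
    IsAttackOn d d[2]! 1 ∨ IsDefenseAgainst d d[2]! 1 := by
  obtain ⟨m, hm, hpar, h⟩ := (isDialogue_iff.mp hd.1).2 2 two_pos hlen
  obtain rfl : m = 1 := by omega
  exact h

end SDialogueFor

theorem IsWinningStrategy.nil_notMem {S : List Move → Prop} {φ : Formula} {T : Set (List Move)}
    (hT : IsWinningStrategy S φ T) : [] ∉ T :=
  fun h => (hT.dialogues [] h).2.2.1.false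

theorem IsWinningStrategy.exists_leaf {S : List Move → Prop} {φ : Formula} {T : Set (List Move)}
    (hT : IsWinningStrategy S φ T) : ∃ d ∈ T, ∀ x, d ++ [x] ∉ T := by
  by_contra! hext
  have hext_insert : ∀ d ∈ insert [] T, ∃ x, d ++ [x] ∈ insert [] T := by
    rintro d (rfl | hd)
    · obtain ⟨_ | ⟨x, e⟩, hd⟩ := hT.nonempty
      · exact absurd hd hT.nil_notMem
      · exact ⟨x, .inr (hT.prefix_closed _ hd [x] (List.prefix_append [x] e) one_pos)⟩
    · exact (hext d hd).imp fun _ => .inr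
  obtain ⟨f, hf⟩ := exists_forall_ofFn_mem (Set.mem_insert [] T) hext_insert
  obtain ⟨n, hn, hnT⟩ := hT.no_infinite_branch f
  exact (hf n).elim (fun hnil => hn.ne' (List.ofFn_eq_nil_iff.mp hnil)) hnT

theorem SValid.exists_winsFor {S : List Move → Prop} {φ : Formula} (h : SValid S φ) :
    ∃ d, WinsFor S φ d := by
  obtain ⟨T, hT⟩ := h
  obtain ⟨d, hd, hleaf⟩ := hT.exists_leaf
  exact ⟨d, hT.leaf_wins d hd hleaf⟩

namespace WinsFor

variable {φ χ : Formula} {a : ℕ} {d : List Move} {m : ℕ}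

theorem not_isDefenseAgainst (hd : WinsFor NRules φ d) (hm : m < d.length) (heven : m % 2 = 0)
    (x : Move) : ¬ IsDefenseAgainst d x m :=
  fun hx => hd.2.2 x (hd.1.concat_defense hd.2.1 hm heven hx)

theorem two_lt_length (hd : WinsFor NRules φ d) {s : Statement} (hs : Attacks s φ) :
    2 < d.length := by
  obtain ⟨hdia, hodd, hmax⟩ := hd
  by_contra hlen
  have hpos : 0 < d.length := hdia.2.2.1
  refine hmax ⟨s, some (0, true)⟩
    (hdia.concat_attack hodd hpos rfl ⟨rfl, φ, hdia.2.2.2, hs⟩ fun i hi => ?_)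
  obtain rfl : i = 0 := by omega
  rw [(hdia.1.1 hpos).1]
  exact (Option.some_ne_none _).symm

theorem stmt_one (hd : WinsFor NRules (.impl χ (.atom a)) d) : d[1]!.stmt = .form χ := by
  have hlen := hd.two_lt_length (.impl χ (.atom a))
  obtain ⟨-, φ, hφ, hatt⟩ := hd.1.isAttackOn_one (by omega)
  obtain rfl := Statement.form.inj (hd.1.2.2.2.symm.trans hφ)
  exact attacks_impl_iff.mp hatt

theorem isAttackOn_two (hd : WinsFor NRules (.impl χ (.atom a)) d) (hχ : χ ≠ .atom a) :
    IsAttackOn d d[2]! 1 := by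
  have hlen := hd.two_lt_length (.impl χ (.atom a))
  refine (hd.1.isAttackOn_or_isDefenseAgainst_two hlen).resolve_right ?_
  rintro ⟨-, k, φ, -, hk, hφ, hdef⟩
  obtain rfl : k = 0 := by omega
  obtain rfl := Statement.form.inj (hd.1.2.2.2.symm.trans hφ)
  rw [hd.stmt_one] at hdef
  obtain ⟨j, hj, hjodd, hstmt⟩ := hd.1.2.1.1 2 hlen rfl a (defends_impl_iff.mp hdef)
  obtain rfl : j = 1 := by omega
  exact hχ (Statement.form.inj (hd.stmt_one.symm.trans hstmt))

end WinsFor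

theorem conj_elim_not_N_valid_general {χ : Formula} {a : ℕ} (hχ : χ ≠ .atom a)
    (hdef : ∀ s, Attacks s χ → ∃ t, Defends t s χ) : ¬ NValid (.impl χ (.atom a)) := by
  intro hvalid
  obtain ⟨d, hd⟩ := hvalid.exists_winsFor
  have hlen : 2 < d.length := hd.two_lt_length (.impl χ (.atom a))
  obtain ⟨href, φ, hφ, hatt⟩ := hd.isAttackOn_two hχ
  obtain rfl := Statement.form.inj (hd.stmt_one.symm.trans hφ)
  obtain ⟨t, ht⟩ := hdef _ hatt
  exact hd.not_isDefenseAgainst hlen rfl ⟨t, some (2, false)⟩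
    ⟨rfl, 1, χ, href, one_lt_two, hφ, ht⟩

/-- Conjunction elimination `(p ∧ q) → p`, for distinct atoms `p`
and `q`, is not N-valid. -/
theorem conj_elim_not_N_valid (p q : ℕ) (hpq : p ≠ q) :
    ¬ NValid (Formula.impl (Formula.conj (Formula.atom p) (Formula.atom q))
        (Formula.atom p)) :=
  conj_elim_not_N_valid_general nofun
    (by rintro _ (_ | _); exacts [⟨_, .conjL _ _⟩, ⟨_, .conjR _ _⟩])
end
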